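/- arXiv:1901.08663 — 4 statements merged into one kernel-verified Lean document; each statement's English description precedes it below -/
import Mathlib

section
/- Let the stepsize μ > 0. Suppose that for some optimal point x* ∈ X* there exists a measurable selection of subgradients g_F(x*;ξ) ∈ ∂F(x*;ξ) with E_ξ[g_F(x*;ξ)] = 0 and E_ξ[‖g_F(x*;ξ)‖²] ≤ S*_F < ∞. Then for every x ∈ ℝ^n one has F* − F_μ(x) ≤ (μ/2)·E_ξ[‖g_F(x*;ξ)‖²] ≤ (μ/2)·S*_F. -/
/- Statement 0: Lemma `lemma_auxres` (ii).
For the stochastic problem `min_x F(x) = E_ξ[F(x;ξ)]` with proper convex lsc components,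
if at an optimal point `x* ∈ X*` there is a subgradient selection `g_F(x*;ξ) ∈ ∂F(x*;ξ)`
with `E[g_F(x*;ξ)] = 0` and `E[‖g_F(x*;ξ)‖²] ≤ S*_F < ∞`, then for all `x`:
`F* − F_μ(x) ≤ (μ/2)·E[‖g_F(x*;ξ)‖²] ≤ (μ/2)·S*_F`.

Extended-real-valued proper functions `F(·;ξ)` are modelled by their effective domain
`D ξ` (nonempty, so proper) together with real values `F ξ` on it; lower semicontinuity is
expressed by closedness of the epigraph.  The Moreau envelope `F_μ(x;ξ)` is the infimum of
`F(z;ξ) + ‖z − x‖²/(2μ)` over the effective domain, and `F_μ(x) = E_ξ[F_μ(x;ξ)]`. -/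

open MeasureTheory Metric Set
open scoped RealInnerProductSpace

noncomputable section

/-!
The subgradient inequality at `x₀` bounds `f z` below by an affine function of `z`. Adding
`‖z - x‖ ^ 2 / (2 * μ)` and completing the square, `μ / 2 * ‖g‖ ^ 2` is the most that the envelope
at `x` can fall below the affine function at `x`. In expectation the linear term is
`⟪E g, x - x₀⟫`, which vanishes when the subgradients have mean zero.
-/

section Subgradient

variable {E : Type*} [NormedAddCommGroup E] [InnerProductSpace ℝ E]

/-- `g` is a subgradient at `x` of the extended-real-valued function with effective domain `s` and
values `f` on it. Membership `x ∈ s` is part of the definition, since the subdifferential is empty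
outside the effective domain. -/
def IsSubgradientOn (s : Set E) (f : E → ℝ) (g x : E) : Prop :=
  x ∈ s ∧ ∀ y ∈ s, f x + ⟪g, y - x⟫ ≤ f y

/-- The Moreau envelope with parameter `μ`, at `x`, of the extended-real-valued function with
effective domain `s` and values `f` on it. The infimum is taken in `ℝ`, so it has the junk value
`0` when `s` is empty or the penalized function is unbounded below on `s`. -/
def moreauEnvelope (s : Set E) (f : E → ℝ) (μ : ℝ) (x : E) : ℝ :=
  ⨅ z : s, (f z + ‖(z : E) - x‖ ^ 2 / (2 * μ))

lemma neg_half_mul_norm_sq_le_real_inner_add {μ : ℝ} (hμ : 0 < μ) (g u : E) :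
    -(μ / 2 * ‖g‖ ^ 2) ≤ ⟪g, u⟫ + ‖u‖ ^ 2 / (2 * μ) := by
  have complete_square :
      ⟪g, u⟫ + ‖u‖ ^ 2 / (2 * μ) + μ / 2 * ‖g‖ ^ 2 = ‖u + μ • g‖ ^ 2 / (2 * μ) := by
    rw [norm_add_sq_real, real_inner_smul_right, real_inner_comm, norm_smul, mul_pow,
      Real.norm_eq_abs, sq_abs]
    field_simp
    ring
  have : 0 ≤ ‖u + μ • g‖ ^ 2 / (2 * μ) := by positivity
  linarith

namespace IsSubgradientOn

variable {s : Set E} {f : E → ℝ} {g x₀ : E} {μ : ℝ}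

lemma add_inner_sub_norm_sq_le (h : IsSubgradientOn s f g x₀) (hμ : 0 < μ) (x : E) {z : E}
    (hz : z ∈ s) :
    f x₀ + ⟪g, x - x₀⟫ - μ / 2 * ‖g‖ ^ 2 ≤ f z + ‖z - x‖ ^ 2 / (2 * μ) := by
  have inner_split : ⟪g, z - x₀⟫ = ⟪g, z - x⟫ + ⟪g, x - x₀⟫ := by
    rw [← inner_add_right, sub_add_sub_cancel]
  linarith [h.2 z hz, neg_half_mul_norm_sq_le_real_inner_add hμ g (z - x)]

lemma le_moreauEnvelope (h : IsSubgradientOn s f g x₀) (hμ : 0 < μ) (x : E) :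
    f x₀ + ⟪g, x - x₀⟫ - μ / 2 * ‖g‖ ^ 2 ≤ moreauEnvelope s f μ x :=
  have : Nonempty s := ⟨x₀, h.1⟩
  le_ciInf fun z => h.add_inner_sub_norm_sq_le hμ x z.2

lemma moreauEnvelope_le (h : IsSubgradientOn s f g x₀) (hμ : 0 < μ) (x : E) :
    moreauEnvelope s f μ x ≤ f x₀ + ‖x₀ - x‖ ^ 2 / (2 * μ) :=
  ciInf_le ⟨_, forall_mem_range.2 fun z => h.add_inner_sub_norm_sq_le hμ x z.2⟩ (⟨x₀, h.1⟩ : s)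

end IsSubgradientOn

end Subgradient

section Expectation

variable {Ω E : Type*} [MeasurableSpace Ω] {P : Measure Ω} [IsFiniteMeasure P]
  [NormedAddCommGroup E] [InnerProductSpace ℝ E]

lemma integrable_add_inner_sub_norm_sq {φ : Ω → ℝ} {g : Ω → E} (hφ : Integrable φ P)
    (hg : MemLp g 2 P) (v : E) (c : ℝ) :
    Integrable (fun ξ => φ ξ + ⟪g ξ, v⟫ - c * ‖g ξ‖ ^ 2) P :=
  (hφ.add ((hg.integrable one_le_two).inner_const v)).sub
    ((hg.integrable_norm_pow two_ne_zero).const_mul c)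

lemma integral_add_inner_sub_norm_sq [CompleteSpace E] {φ : Ω → ℝ} {g : Ω → E}
    (hφ : Integrable φ P) (hg : MemLp g 2 P) (v : E) (c : ℝ) :
    ∫ ξ, (φ ξ + ⟪g ξ, v⟫ - c * ‖g ξ‖ ^ 2) ∂P =
      ∫ ξ, φ ξ ∂P + ⟪∫ ξ, g ξ ∂P, v⟫ - c * ∫ ξ, ‖g ξ‖ ^ 2 ∂P := by
  have hg₁ : Integrable g P := hg.integrable one_le_two
  have integral_inner_const : ∫ ξ, ⟪g ξ, v⟫ ∂P = ⟪∫ ξ, g ξ ∂P, v⟫ := by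
    simp only [real_inner_comm v, integral_inner hg₁]
  have hsum : Integrable (fun ξ => φ ξ + ⟪g ξ, v⟫) P := hφ.add (hg₁.inner_const v)
  rw [integral_sub hsum ((hg.integrable_norm_pow two_ne_zero).const_mul c),
    integral_add hφ (hg₁.inner_const v), integral_inner_const, integral_const_mul]

variable {D : Ω → Set E} {F : Ω → E → ℝ} {g : Ω → E} {x₀ : E} {μ : ℝ}

lemma integrable_moreauEnvelope (hF : Integrable (fun ξ => F ξ x₀) P) (hg : MemLp g 2 P)
    (hsub : ∀ᵐ ξ ∂P, IsSubgradientOn (D ξ) (F ξ) (g ξ) x₀) (hμ : 0 < μ) {x : E}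
    (hmeas : AEStronglyMeasurable (fun ξ => moreauEnvelope (D ξ) (F ξ) μ x) P) :
    Integrable (fun ξ => moreauEnvelope (D ξ) (F ξ) μ x) P :=
  integrable_of_le_of_le hmeas (hsub.mono fun _ h => h.le_moreauEnvelope hμ x)
    (hsub.mono fun _ h => h.moreauEnvelope_le hμ x)
    (integrable_add_inner_sub_norm_sq hF hg (x - x₀) (μ / 2)) (hF.add (integrable_const _))

lemma add_inner_sub_norm_sq_le_integral_moreauEnvelope [CompleteSpace E]
    (hF : Integrable (fun ξ => F ξ x₀) P) (hg : MemLp g 2 P)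
    (hsub : ∀ᵐ ξ ∂P, IsSubgradientOn (D ξ) (F ξ) (g ξ) x₀) (hμ : 0 < μ) {x : E}
    (hmeas : AEStronglyMeasurable (fun ξ => moreauEnvelope (D ξ) (F ξ) μ x) P) :
    ∫ ξ, F ξ x₀ ∂P + ⟪∫ ξ, g ξ ∂P, x - x₀⟫ - μ / 2 * ∫ ξ, ‖g ξ‖ ^ 2 ∂P ≤
      ∫ ξ, moreauEnvelope (D ξ) (F ξ) μ x ∂P := by
  rw [← integral_add_inner_sub_norm_sq hF hg]
  exact integral_mono_ae (integrable_add_inner_sub_norm_sq hF hg (x - x₀) (μ / 2))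
    (integrable_moreauEnvelope hF hg hsub hμ hmeas)
    (hsub.mono fun _ h => h.le_moreauEnvelope hμ x)

theorem spp_lemma_auxres_ii_general [CompleteSpace E]
    (hF : Integrable (fun ξ => F ξ x₀) P) (hg : MemLp g 2 P) (hmean : ∫ ξ, g ξ ∂P = 0)
    (hsub : ∀ᵐ ξ ∂P, IsSubgradientOn (D ξ) (F ξ) (g ξ) x₀) (hμ : 0 < μ) {x : E}
    (hmeas : AEStronglyMeasurable (fun ξ => moreauEnvelope (D ξ) (F ξ) μ x) P) :
    ∫ ξ, F ξ x₀ ∂P - ∫ ξ, moreauEnvelope (D ξ) (F ξ) μ x ∂P ≤ μ / 2 * ∫ ξ, ‖g ξ‖ ^ 2 ∂P := by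
  have bound := add_inner_sub_norm_sq_le_integral_moreauEnvelope hF hg hsub hμ hmeas
  rw [hmean, inner_zero_left] at bound
  linarith

end Expectation

theorem spp_lemma_auxres_ii
    {n : ℕ} {Ω : Type} [MeasurableSpace Ω] (P : Measure Ω) [IsProbabilityMeasure P]
    -- the components F(·;ξ): effective domain D ξ and real values F ξ on it
    (D : Ω → Set (EuclideanSpace ℝ (Fin n)))
    (F : Ω → EuclideanSpace ℝ (Fin n) → ℝ)
    -- proper, convex, lower semicontinuous
    (hDne : ∀ ξ, (D ξ).Nonempty)
    (hDconv : ∀ ξ, Convex ℝ (D ξ))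
    (hFconv : ∀ ξ, ConvexOn ℝ (D ξ) (F ξ))
    (hFlsc : ∀ ξ, IsClosed {p : EuclideanSpace ℝ (Fin n) × ℝ | p.1 ∈ D ξ ∧ F ξ p.1 ≤ p.2})
    -- the optimal set X* (argmin of F = E[F(·;ξ)]) and the optimal value F*
    (Xstar : Set (EuclideanSpace ℝ (Fin n))) (Fstar : ℝ)
    (hXstar : ∀ x, x ∈ Xstar ↔
      ((∀ ξ, x ∈ D ξ) ∧ Integrable (fun ξ => F ξ x) P ∧ ∫ ξ, F ξ x ∂P = Fstar))
    (hFmin : ∀ x, (∀ ξ, x ∈ D ξ) → Integrable (fun ξ => F ξ x) P → Fstar ≤ ∫ ξ, F ξ x ∂P)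
    -- an optimal point
    (xstar : EuclideanSpace ℝ (Fin n)) (hxstar : xstar ∈ Xstar)
    -- a measurable selection of subgradients g_F(x*;ξ) ∈ ∂F(x*;ξ)
    (g : Ω → EuclideanSpace ℝ (Fin n)) (SF : ℝ)
    (hg : ∀ ξ, ∀ y ∈ D ξ, F ξ xstar + ⟪g ξ, y - xstar⟫ ≤ F ξ y)
    (hgint : Integrable g P)
    (hgmean : (∫ ξ, g ξ ∂P) = 0)
    (hg2int : Integrable (fun ξ => ‖g ξ‖ ^ 2) P)
    (hSF : (∫ ξ, ‖g ξ‖ ^ 2 ∂P) ≤ SF)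
    -- the stepsize μ > 0 and the Moreau envelope F_μ(x;ξ), F_μ(x) = E[F_μ(x;ξ)]
    (μ : ℝ) (hμ : 0 < μ)
    (Fmu : Ω → EuclideanSpace ℝ (Fin n) → ℝ)
    (hFmu : ∀ ξ x, Fmu ξ x = ⨅ z : D ξ,
      (F ξ z + ‖(z : EuclideanSpace ℝ (Fin n)) - x‖ ^ 2 / (2 * μ)))
    (hFmuint : ∀ x, Integrable (fun ξ => Fmu ξ x) P) :
    ∀ x, Fstar - (∫ ξ, Fmu ξ x ∂P) ≤ μ / 2 * ∫ ξ, ‖g ξ‖ ^ 2 ∂P ∧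
      μ / 2 * (∫ ξ, ‖g ξ‖ ^ 2 ∂P) ≤ μ / 2 * SF := by
  obtain ⟨hxD, hFint, rfl⟩ := (hXstar xstar).1 hxstar
  obtain rfl : Fmu = fun ξ => moreauEnvelope (D ξ) (F ξ) μ := funext₂ hFmu
  have hgL2 : MemLp g 2 P := (memLp_two_iff_integrable_sq_norm hgint.1).2 hg2int
  exact fun x => ⟨spp_lemma_auxres_ii_general hFint hgL2 hgmean
    (.of_forall fun ξ => ⟨hxD ξ, hg ξ⟩) hμ (hFmuint x).1, by gcongr⟩
end
end

section
/- Suppose each f(·;ξ): ℝ^n → ℝ is convex, differentiable, and its gradient is Lipschitz continuous with constant L_ξ. Then for every μ > 0 and every x ∈ ℝ^n: E_ξ[ ‖∇f(x;ξ)‖² / (1 + L_ξ μ)² ] ≤ E_ξ[ ‖∇f_μ(x;ξ)‖² ]. -/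
/- Statement 2: Theorem `lemma_gradorder`.
If each `f(·;ξ)` is convex differentiable with `L_ξ`-Lipschitz gradient, then for every
`μ > 0` and every `x`:
`E_ξ[ ‖∇f(x;ξ)‖²/(1 + L_ξ μ)² ] ≤ E_ξ[ ‖∇f_μ(x;ξ)‖² ]`,
where `∇f_μ(x;ξ) = (x − z_μ(x;ξ))/μ` and `z_μ(x;ξ)` is the proximal point of `f(·;ξ)`. -/

open MeasureTheory Metric Set
open scoped RealInnerProductSpace

noncomputable section

/-! Since `z = prox x` minimizes `y ↦ f y + ‖y - x‖² / (2μ)`, the first-order condition identifies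
the gradient of the Moreau envelope at `x` with a gradient of `f` at another point:
`∇f z = μ⁻¹ • (x - z)`. As `‖x - z‖ = μ ‖∇f z‖`, the Lipschitz condition gives
`‖∇f x‖ ≤ ‖∇f z‖ + L ‖x - z‖ = (1 + L μ) ‖∇f z‖`; square and integrate. -/

open scoped NNReal

section ProximalPoint

variable {E : Type*} [NormedAddCommGroup E] [InnerProductSpace ℝ E]

/-- `z` is a proximal point of `f` at `x` with step size `μ`, that is, a global minimizer of the
objective defining the Moreau envelope of `f` at `x`. Uniqueness is not part of the notion, so that
it makes sense for nonconvex `f`. -/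
def IsProxPoint (f : E → ℝ) (μ : ℝ) (x z : E) : Prop :=
  IsMinOn (fun y ↦ f y + ‖y - x‖ ^ 2 / (2 * μ)) univ z

variable [CompleteSpace E]

theorem hasGradientAt_norm_sub_sq_div (μ : ℝ) (x z : E) :
    HasGradientAt (fun y ↦ ‖y - x‖ ^ 2 / (2 * μ)) (μ⁻¹ • (z - x)) z := by
  have hsq := ((hasFDerivAt_id (𝕜 := ℝ) z).sub_const x).norm_sq.mul_const (2 * μ)⁻¹
  refine hasGradientAt_iff_hasFDerivAt.2 (hsq.congr_fderiv ?_)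
  ext v
  simp only [id_eq, ContinuousLinearMap.comp_id, two_smul, smul_add, add_apply, smul_apply,
    coe_innerSL_apply, smul_eq_mul, map_smul, InnerProductSpace.toDual_apply_apply]
  ring

theorem IsProxPoint.gradient_eq {f : E → ℝ} {μ : ℝ} {x z f' : E}
    (hz : IsProxPoint f μ x z) (hf : HasGradientAt f f' z) : f' = μ⁻¹ • (x - z) := by
  have hmin : IsLocalMin (fun y ↦ f y + ‖y - x‖ ^ 2 / (2 * μ)) z := hz.isLocalMin Filter.univ_mem
  have hstat := hmin.hasFDerivAt_eq_zero
    (hf.hasFDerivAt.add (hasGradientAt_norm_sub_sq_div μ x z).hasFDerivAt)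
  rw [← map_add, map_eq_zero_iff _ (InnerProductSpace.toDual ℝ E).injective] at hstat
  rw [eq_neg_of_add_eq_zero_left hstat, ← smul_neg, neg_sub]

theorem IsProxPoint.norm_gradient_le {f : E → ℝ} {g : E → E} {μ : ℝ} {x z : E} {K : ℝ≥0}
    (hz : IsProxPoint f μ x z) (hμ : 0 < μ) (hf : HasGradientAt f (g z) z)
    (hg : LipschitzWith K g) : ‖g x‖ ≤ (1 + K * μ) * ‖μ⁻¹ • (x - z)‖ := by
  have hdist : ‖x - z‖ = μ * ‖μ⁻¹ • (x - z)‖ := by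
    rw [norm_smul_of_nonneg (inv_nonneg.2 hμ.le), mul_inv_cancel_left₀ hμ.ne']
  calc
    ‖g x‖ ≤ ‖g z‖ + ‖g x - g z‖ := norm_le_norm_add_norm_sub' _ _
    _ ≤ ‖g z‖ + K * ‖x - z‖ := by gcongr; exact hg.norm_sub_le x z
    _ = ‖μ⁻¹ • (x - z)‖ + K * (μ * ‖μ⁻¹ • (x - z)‖) := by rw [hz.gradient_eq hf, hdist]
    _ = (1 + K * μ) * ‖μ⁻¹ • (x - z)‖ := by ring

theorem spp_lemma_gradorder_general {Ω : Type*} [MeasurableSpace Ω] {P : Measure Ω}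
    {f : Ω → E → ℝ} {g : Ω → E → E} {L : Ω → ℝ≥0} {μ : ℝ} {x : E} {z : Ω → E}
    (hgrad : ∀ ξ y, HasGradientAt (f ξ) (g ξ y) y) (hLip : ∀ ξ, LipschitzWith (L ξ) (g ξ))
    (hμ : 0 < μ) (hprox : ∀ ξ, IsProxPoint (f ξ) μ x (z ξ))
    (hint_grad : Integrable (fun ξ ↦ ‖g ξ x‖ ^ 2 / (1 + L ξ * μ) ^ 2) P)
    (hint_prox : Integrable (fun ξ ↦ ‖μ⁻¹ • (x - z ξ)‖ ^ 2) P) :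
    ∫ ξ, ‖g ξ x‖ ^ 2 / (1 + L ξ * μ) ^ 2 ∂P ≤ ∫ ξ, ‖μ⁻¹ • (x - z ξ)‖ ^ 2 ∂P := by
  refine integral_mono hint_grad hint_prox fun ξ ↦ ?_
  have hbound := (hprox ξ).norm_gradient_le hμ (hgrad ξ (z ξ)) (hLip ξ)
  rw [div_le_iff₀' (by positivity), ← mul_pow]
  gcongr

end ProximalPoint

theorem spp_lemma_gradorder
    {n : ℕ} {Ω : Type} [MeasurableSpace Ω] (P : Measure Ω) [IsProbabilityMeasure P]
    (f : Ω → EuclideanSpace ℝ (Fin n) → ℝ)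
    (fgrad : Ω → EuclideanSpace ℝ (Fin n) → EuclideanSpace ℝ (Fin n))
    (L : Ω → ℝ)
    (hconv : ∀ ξ, ConvexOn ℝ Set.univ (f ξ))
    (hgrad : ∀ ξ x, HasGradientAt (f ξ) (fgrad ξ x) x)
    (hLnonneg : ∀ ξ, 0 ≤ L ξ)
    (hLip : ∀ ξ x y, ‖fgrad ξ x - fgrad ξ y‖ ≤ L ξ * ‖x - y‖)
    -- the stepsize and the proximal operator z_μ(x;ξ)
    (μ : ℝ) (hμ : 0 < μ)
    (prox : EuclideanSpace ℝ (Fin n) → Ω → EuclideanSpace ℝ (Fin n))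
    (hprox : ∀ x ξ y, f ξ (prox x ξ) + ‖prox x ξ - x‖ ^ 2 / (2 * μ)
      ≤ f ξ y + ‖y - x‖ ^ 2 / (2 * μ))
    -- integrability of both sides
    (hint1 : ∀ x, Integrable (fun ξ => ‖fgrad ξ x‖ ^ 2 / (1 + L ξ * μ) ^ 2) P)
    (hint2 : ∀ x, Integrable (fun ξ => ‖μ⁻¹ • (x - prox x ξ)‖ ^ 2) P) :
    ∀ x, (∫ ξ, ‖fgrad ξ x‖ ^ 2 / (1 + L ξ * μ) ^ 2 ∂P)
      ≤ ∫ ξ, ‖μ⁻¹ • (x - prox x ξ)‖ ^ 2 ∂P := by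
  lift L to Ω → ℝ≥0 using hLnonneg
  exact fun x ↦ spp_lemma_gradorder_general hgrad
    (fun ξ ↦ .of_dist_le_mul fun y z ↦ by simpa only [dist_eq_norm] using hLip ξ y z)
    hμ (fun ξ y _ ↦ hprox x ξ y) (hint1 x) (hint2 x)
end
end

section
/- Let {X_ξ}_{ξ∈Ω} be closed convex sets with nonempty intersection X = ∩_ξ X_ξ that are linearly regular with constant σ_X ∈ (0,1]. Let {x^k} be generated by stochastic alternating projections: x^{k+1} = π_{X_{ξ_k}}(x^k) with ξ_k drawn i.i.d. with distribution P. Then E[ dist_X²(x^k) ] ≤ (1 − σ_X)^k · dist_X²(x^0) for all k ≥ 0. -/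
/- Statement 13: linear convergence of stochastic alternating projections.
If the closed convex sets `{X_ξ}` with nonempty intersection `X = ∩_ξ X_ξ` are linearly
regular with constant `σ_X ∈ (0,1]`, then the SAP iterates
`x^{k+1} = π_{X_{ξ_k}}(x^k)` (i.i.d. samples `ξ_k ∼ P`) satisfy
`E[dist²_X(x^k)] ≤ (1 − σ_X)^k ⋅ dist²_X(x^0)` for all `k ≥ 0`.
The iterate `x^k` is a function of the first `k` samples, the expectation being taken
with respect to the `k`-fold product measure; `π` is the metric projection, characterized
as the closest point of the set. -/

open MeasureTheory Metric Set

noncomputable section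

/-! Pythagoras for a convex set: if `p` is the projection of `x` onto `C` and `z ∈ C`, the angle at
`p` is obtuse, so `‖x - p‖² + ‖p - z‖² ≤ ‖x - z‖²`. Taking the infimum over `z ∈ X ⊆ X_ξ` and then
the expectation over `ξ`, linear regularity makes `dist_X²` contract in conditional expectation
by the factor `1 - σ_X`; integrating out the last sample first iterates this.

All expectations are bounded as lower Lebesgue integrals, for which one inequality of Tonelli's
theorem holds without measurability of the projections or of the iterates. -/

open scoped ENNReal

section Projection

/-- `p` is a metric projection of `x` onto `C`, i.e. a closest point of `C`. Encoding `π_C` as a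
relation avoids a choice of closest point and any assumption that one exists. -/
def IsMetricProj {E : Type*} [SeminormedAddCommGroup E] (C : Set E) (x p : E) : Prop :=
  p ∈ C ∧ ∀ z ∈ C, ‖x - p‖ ≤ ‖x - z‖

theorem IsMetricProj.norm_sub_eq_iInf {E : Type*} [SeminormedAddCommGroup E] {C : Set E} {x p : E}
    (h : IsMetricProj C x p) : ‖x - p‖ = ⨅ w : C, ‖x - w‖ :=
  have : Nonempty C := ⟨⟨p, h.1⟩⟩
  le_antisymm (le_ciInf fun w => h.2 w w.2)
    (ciInf_le (f := fun w : C => ‖x - w‖) ⟨0, forall_mem_range.2 fun _ => norm_nonneg _⟩ ⟨p, h.1⟩)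

variable {E : Type*} [NormedAddCommGroup E] [InnerProductSpace ℝ E]

namespace IsMetricProj

variable {C Y : Set E} {x p z : E}

theorem inner_sub_sub_nonpos (h : IsMetricProj C x p) (hC : Convex ℝ C) (hz : z ∈ C) :
    inner ℝ (x - p) (z - p) ≤ 0 :=
  (norm_eq_iInf_iff_real_inner_le_zero hC h.1).1 h.norm_sub_eq_iInf z hz

theorem norm_sub_sq_add_norm_sub_sq_le (h : IsMetricProj C x p) (hC : Convex ℝ C) (hz : z ∈ C) :
    ‖x - p‖ ^ 2 + ‖p - z‖ ^ 2 ≤ ‖x - z‖ ^ 2 := by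
  have law_of_cosines :
      ‖x - z‖ ^ 2 = ‖x - p‖ ^ 2 - 2 * inner ℝ (x - p) (z - p) + ‖z - p‖ ^ 2 := by
    rw [← norm_sub_sq_real, sub_sub_sub_cancel_right]
  rw [law_of_cosines, norm_sub_rev p z]
  linarith [h.inner_sub_sub_nonpos hC hz]

theorem infDist_sq_add_infDist_sq_le (h : IsMetricProj C x p) (hC : Convex ℝ C)
    (hY : Y.Nonempty) (hYC : Y ⊆ C) :
    infDist x C ^ 2 + infDist p Y ^ 2 ≤ infDist x Y ^ 2 := by
  have sq_le_of_mem : ∀ z ∈ Y, infDist x C ^ 2 + infDist p Y ^ 2 ≤ dist x z ^ 2 := fun z hz =>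
    calc infDist x C ^ 2 + infDist p Y ^ 2
        ≤ dist x p ^ 2 + dist p z ^ 2 := by
          gcongr
          · exact infDist_nonneg
          · exact infDist_le_dist_of_mem h.1
          · exact infDist_nonneg
          · exact infDist_le_dist_of_mem hz
      _ ≤ dist x z ^ 2 := by
          simpa only [dist_eq_norm] using h.norm_sub_sq_add_norm_sub_sq_le hC (hYC hz)
  exact (Real.sqrt_le_left infDist_nonneg).1 <|
    (le_infDist hY).2 fun z hz => (Real.sqrt_le_left dist_nonneg).2 (sq_le_of_mem z hz)

end IsMetricProj

theorem lintegral_infDist_metricProj_sq_le {Ω : Type*} [MeasurableSpace Ω] {P : Measure Ω}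
    [IsProbabilityMeasure P] {X : Ω → Set E} {Y : Set E} {σ : ℝ} {x : E} {p : Ω → E}
    (hXconv : ∀ ξ, Convex ℝ (X ξ)) (hY : Y.Nonempty) (hYX : ∀ ξ, Y ⊆ X ξ)
    (hint : Integrable (fun ξ => infDist x (X ξ) ^ 2) P)
    (hreg : σ * infDist x Y ^ 2 ≤ ∫ ξ, infDist x (X ξ) ^ 2 ∂P)
    (hp : ∀ ξ, IsMetricProj (X ξ) x (p ξ)) :
    ∫⁻ ξ, ENNReal.ofReal (infDist (p ξ) Y ^ 2) ∂P
      ≤ ENNReal.ofReal (1 - σ) * ENNReal.ofReal (infDist x Y ^ 2) := by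
  have decrease (ξ : Ω) : infDist (p ξ) Y ^ 2 ≤ infDist x Y ^ 2 - infDist x (X ξ) ^ 2 := by
    linarith [(hp ξ).infDist_sq_add_infDist_sq_le (hXconv ξ) hY (hYX ξ)]
  calc ∫⁻ ξ, ENNReal.ofReal (infDist (p ξ) Y ^ 2) ∂P
      ≤ ∫⁻ ξ, ENNReal.ofReal (infDist x Y ^ 2 - infDist x (X ξ) ^ 2) ∂P :=
        lintegral_mono fun ξ => ENNReal.ofReal_le_ofReal (decrease ξ)
    _ = ENNReal.ofReal (∫ ξ, (infDist x Y ^ 2 - infDist x (X ξ) ^ 2) ∂P) :=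
        (ofReal_integral_eq_lintegral_ofReal ((integrable_const _).sub hint)
          (.of_forall fun ξ => (sq_nonneg _).trans (decrease ξ))).symm
    _ = ENNReal.ofReal (infDist x Y ^ 2 - ∫ ξ, infDist x (X ξ) ^ 2 ∂P) := by
        rw [integral_sub (integrable_const _) hint, integral_const, probReal_univ, one_smul]
    _ ≤ ENNReal.ofReal ((1 - σ) * infDist x Y ^ 2) := ENNReal.ofReal_le_ofReal (by linarith)
    _ = ENNReal.ofReal (1 - σ) * ENNReal.ofReal (infDist x Y ^ 2) :=
        ENNReal.ofReal_mul' (sq_nonneg _)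

end Projection

section Integration

theorem lintegral_pi_insertNth_le {n : ℕ} {α : Fin (n + 1) → Type*} [∀ i, MeasurableSpace (α i)]
    (μ : ∀ i, Measure (α i)) [∀ i, SigmaFinite (μ i)] (i : Fin (n + 1))
    (f : (∀ j, α j) → ℝ≥0∞) :
    ∫⁻ ω, f ω ∂Measure.pi μ
      ≤ ∫⁻ ω, ∫⁻ ξ, f (i.insertNth ξ ω) ∂μ i ∂Measure.pi fun j => μ (i.succAbove j) := by
  let e := MeasurableEquiv.prodComm.trans (MeasurableEquiv.piFinSuccAbove α i).symm
  have he : MeasurePreserving e ((Measure.pi fun j => μ (i.succAbove j)).prod (μ i))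
      (Measure.pi μ) :=
    (measurePreserving_piFinSuccAbove μ i).symm.comp Measure.measurePreserving_swap
  calc ∫⁻ ω, f ω ∂Measure.pi μ
      = ∫⁻ q, f (e q) ∂(Measure.pi fun j => μ (i.succAbove j)).prod (μ i) :=
        (he.lintegral_comp_emb e.measurableEmbedding f).symm
    _ ≤ ∫⁻ ω, ∫⁻ ξ, f (i.insertNth ξ ω) ∂μ i ∂Measure.pi fun j => μ (i.succAbove j) :=
        lintegral_prod_le fun q => f (e q)

theorem lintegral_randomIterate_le {Ω S : Type*} [MeasurableSpace Ω] {P : Measure Ω}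
    [SigmaFinite P] {T : Ω → S → S} {V : S → ℝ≥0∞} {r : ℝ≥0∞} (hr : r ≠ ∞)
    (hV : ∀ x, ∫⁻ ξ, V (T ξ x) ∂P ≤ r * V x)
    {x₀ : S} {traj : (k : ℕ) → (Fin k → Ω) → S} (htraj_zero : ∀ ω, traj 0 ω = x₀)
    (htraj_succ : ∀ k (ω : Fin (k + 1) → Ω),
      traj (k + 1) ω = T (ω (Fin.last k)) (traj k fun i => ω i.castSucc)) (k : ℕ) :
    ∫⁻ ω, V (traj k ω) ∂(Measure.pi fun _ : Fin k => P) ≤ r ^ k * V x₀ := by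
  induction k with
  | zero => simp [htraj_zero]
  | succ k ih =>
    have traj_insertNth_last (ω : Fin k → Ω) (ξ : Ω) :
        traj (k + 1) ((Fin.last k).insertNth ξ ω) = T ξ (traj k ω) := by
      simp only [htraj_succ, Fin.insertNth_last', Fin.snoc_last, Fin.snoc_castSucc]
    calc ∫⁻ ω, V (traj (k + 1) ω) ∂(Measure.pi fun _ : Fin (k + 1) => P)
        ≤ ∫⁻ ω, ∫⁻ ξ, V (T ξ (traj k ω)) ∂P ∂(Measure.pi fun _ : Fin k => P) := by
          simpa only [traj_insertNth_last] using
            lintegral_pi_insertNth_le (fun _ => P) (Fin.last k) fun ω => V (traj (k + 1) ω)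
      _ ≤ ∫⁻ ω, r * V (traj k ω) ∂(Measure.pi fun _ : Fin k => P) :=
          lintegral_mono fun ω => hV (traj k ω)
      _ = r * ∫⁻ ω, V (traj k ω) ∂(Measure.pi fun _ : Fin k => P) := lintegral_const_mul' _ _ hr
      _ ≤ r * (r ^ k * V x₀) := by gcongr
      _ = r ^ (k + 1) * V x₀ := by rw [pow_succ', mul_assoc]

theorem integral_le_of_lintegral_ofReal_le {α : Type*} [MeasurableSpace α] {μ : Measure α}
    {f : α → ℝ} {c : ℝ} (hc : 0 ≤ c) (h : ∫⁻ a, ENNReal.ofReal (f a) ∂μ ≤ ENNReal.ofReal c) :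
    ∫ a, f a ∂μ ≤ c := by
  by_cases hf : Integrable f μ
  · rw [integral_eq_lintegral_pos_part_sub_lintegral_neg_part hf]
    exact (sub_le_self _ ENNReal.toReal_nonneg).trans (ENNReal.toReal_le_of_le_ofReal hc h)
  · rwa [integral_undef hf]

end Integration

theorem sap_linear_convergence_general
    {E : Type*} [NormedAddCommGroup E] [InnerProductSpace ℝ E]
    {Ω : Type*} [MeasurableSpace Ω] (P : Measure Ω) [IsProbabilityMeasure P]
    (X : Ω → Set E) (hXconv : ∀ ξ, Convex ℝ (X ξ)) (hXXne : (⋂ ξ, X ξ).Nonempty)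
    (σX : ℝ) (hdint : ∀ x, Integrable (fun ξ => infDist x (X ξ) ^ 2) P)
    (hLR : ∀ x, σX * infDist x (⋂ ξ, X ξ) ^ 2 ≤ ∫ ξ, infDist x (X ξ) ^ 2 ∂P)
    (proj : Ω → E → E) (hproj : ∀ ξ x, IsMetricProj (X ξ) x (proj ξ x))
    (x0 : E) (traj : (k : ℕ) → (Fin k → Ω) → E) (htraj0 : ∀ ω, traj 0 ω = x0)
    (htrajS : ∀ k (ω : Fin (k + 1) → Ω),
      traj (k + 1) ω = proj (ω (Fin.last k)) (traj k fun i => ω i.castSucc)) (k : ℕ) :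
    ∫⁻ ω, ENNReal.ofReal (infDist (traj k ω) (⋂ ξ, X ξ) ^ 2) ∂(Measure.pi fun _ : Fin k => P)
      ≤ ENNReal.ofReal (1 - σX) ^ k * ENNReal.ofReal (infDist x0 (⋂ ξ, X ξ) ^ 2) :=
  lintegral_randomIterate_le (V := fun x => ENNReal.ofReal (infDist x (⋂ ξ, X ξ) ^ 2))
    ENNReal.ofReal_ne_top
    (fun x => lintegral_infDist_metricProj_sq_le hXconv hXXne (iInter_subset X) (hdint x) (hLR x)
      fun ξ => hproj ξ x)
    htraj0 htrajS k

theorem sap_linear_convergence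
    {n : ℕ} {Ω : Type} [MeasurableSpace Ω] (P : Measure Ω) [IsProbabilityMeasure P]
    -- closed convex sets with nonempty intersection
    (X : Ω → Set (EuclideanSpace ℝ (Fin n)))
    (hXclosed : ∀ ξ, IsClosed (X ξ)) (hXconv : ∀ ξ, Convex ℝ (X ξ))
    (hXXne : (⋂ ξ, X ξ).Nonempty)
    -- linear regularity with constant σ_X ∈ (0,1]
    (σX : ℝ) (hσX : σX ∈ Set.Ioc (0 : ℝ) 1)
    (hdint : ∀ x, Integrable (fun ξ => (infDist x (X ξ)) ^ 2) P)
    (hLR : ∀ x, σX * (infDist x (⋂ ξ, X ξ)) ^ 2 ≤ ∫ ξ, (infDist x (X ξ)) ^ 2 ∂P)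
    -- the metric projection onto each X_ξ
    (proj : Ω → EuclideanSpace ℝ (Fin n) → EuclideanSpace ℝ (Fin n))
    (hproj : ∀ ξ x, proj ξ x ∈ X ξ ∧ ∀ z ∈ X ξ, ‖x - proj ξ x‖ ≤ ‖x - z‖)
    -- the SAP trajectory: x^k is a function of the first k i.i.d. samples
    (x0 : EuclideanSpace ℝ (Fin n))
    (traj : (k : ℕ) → (Fin k → Ω) → EuclideanSpace ℝ (Fin n))
    (htraj0 : ∀ ω, traj 0 ω = x0)
    (htrajS : ∀ k (ω : Fin (k + 1) → Ω),
      traj (k + 1) ω = proj (ω (Fin.last k)) (traj k fun i => ω i.castSucc)) :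
    ∀ k : ℕ,
      (∫ ω, (infDist (traj k ω) (⋂ ξ, X ξ)) ^ 2 ∂(Measure.pi fun _ : Fin k => P))
        ≤ (1 - σX) ^ k * (infDist x0 (⋂ ξ, X ξ)) ^ 2 := by
  intro k
  have rate_nonneg : 0 ≤ 1 - σX := sub_nonneg.2 hσX.2
  refine integral_le_of_lintegral_ofReal_le (by positivity) ?_
  rw [ENNReal.ofReal_mul' (sq_nonneg _), ENNReal.ofReal_pow rate_nonneg]
  exact sap_linear_convergence_general P X hXconv hXXne σX hdint hLR proj hproj x0 traj htraj0
    htrajS k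
end
end

section
/- Let f: ℝ^n → ℝ be convex, differentiable, and M-restricted strongly convex for a symmetric positive semidefinite n×n matrix M, and for μ > 0 let z_μ(x) := argmin_z { f(z) + (1/(2μ))‖z − x‖² } be its proximal operator. Then for all x, y ∈ ℝ^n: ‖(I_n + μM)^{1/2}( z_μ(x) − z_μ(y) )‖ ≤ ‖(I_n + μM)^{−1/2}( x − y )‖. -/
/- Statement 17: the contraction property (eq. (contraction)).
For `f` convex differentiable and `M`-restricted strongly convex (`M ⪰ 0` symmetric),
with proximal operator `z_μ` (so `∇f(z_μ(x)) = (x − z_μ(x))/μ`), one has for all `x, y`: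
`‖(I + μM)^{1/2}(z_μ(x) − z_μ(y))‖ ≤ ‖(I + μM)^{−1/2}(x − y)‖`.
The square root `S = (I + μM)^{1/2}` is characterized as the positive semidefinite matrix
with `S·S = I + μM`, and `(I + μM)^{−1/2} = S⁻¹`. -/

open Metric Set
open scoped RealInnerProductSpace

noncomputable section

/-!
Subtracting the resolvent equations `z x + μ • F (z x) = x` at two points and pairing with
`d = z x - z y` turns restricted strong monotonicity into `⟪d, (1 + μP) d⟫ ≤ ⟪x - y, d⟫`. With
`S² = 1 + μP` the left side is `‖S d‖²`, and the right side is `⟪S⁻¹ (x - y), S d⟫`, so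
Cauchy–Schwarz followed by division by `‖S d‖` gives the contraction.
-/

section Resolvent

variable {E : Type*} [AddCommGroup E] [Module ℝ E] {F z : E → E} {μ : ℝ}

/-- `z` is a resolvent `(1 + μF)⁻¹` of the operator `F`, as the proximal operator of `f` is for
`F = ∇f`. The defining equation is written without dividing by `μ`. -/
def IsResolvent (μ : ℝ) (F z : E → E) : Prop :=
  ∀ x, z x + μ • F (z x) = x

theorem isResolvent_of_eq_inv_smul_sub (hμ : μ ≠ 0) (h : ∀ x, F (z x) = μ⁻¹ • (x - z x)) :
    IsResolvent μ F z := fun x ↦ by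
  rw [h, smul_inv_smul₀ hμ, add_sub_cancel]

theorem IsResolvent.sub_add_smul_sub (hz : IsResolvent μ F z) (x y : E) :
    z x - z y + μ • (F (z x) - F (z y)) = x - y := by
  rw [smul_sub, sub_add_sub_comm, hz, hz]

end Resolvent

section InnerProductSpace

variable {E : Type*} [NormedAddCommGroup E] [InnerProductSpace ℝ E]
  {F z : E → E} {P S T : E →ₗ[ℝ] E} {μ : ℝ}

/-- Strong monotonicity of `F` measured by the quadratic form of `P`. For `F = ∇f` this is
`P`-restricted strong convexity of `f`. -/
def RestrictedStronglyMonotone (P : E →ₗ[ℝ] E) (F : E → E) : Prop :=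
  ∀ x y, ⟪x - y, P (x - y)⟫ ≤ ⟪F x - F y, x - y⟫

theorem RestrictedStronglyMonotone.inner_resolvent_sub_le (hF : RestrictedStronglyMonotone P F)
    (hμ : 0 ≤ μ) (hz : IsResolvent μ F z) (x y : E) :
    ⟪z x - z y, (LinearMap.id + μ • P : E →ₗ[ℝ] E) (z x - z y)⟫ ≤ ⟪x - y, z x - z y⟫ :=
  calc ⟪z x - z y, (LinearMap.id + μ • P : E →ₗ[ℝ] E) (z x - z y)⟫
      = ⟪z x - z y, z x - z y⟫ + μ * ⟪z x - z y, P (z x - z y)⟫ := by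
        rw [LinearMap.add_apply, LinearMap.id_apply, LinearMap.smul_apply, inner_add_right,
          real_inner_smul_right]
    _ ≤ ⟪z x - z y, z x - z y⟫ + μ * ⟪F (z x) - F (z y), z x - z y⟫ := by
        gcongr
        exact hF (z x) (z y)
    _ = ⟪x - y, z x - z y⟫ := by
        rw [← real_inner_smul_left, ← inner_add_left, hz.sub_add_smul_sub]

theorem norm_apply_le_norm_apply_of_inner_le (hS : S.IsSymmetric) (hST : S ∘ₗ T = LinearMap.id)
    {d w : E} (h : ⟪d, (S ∘ₗ S) d⟫ ≤ ⟪w, d⟫) : ‖S d‖ ≤ ‖T w‖ := by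
  have hmul : ‖S d‖ * ‖S d‖ ≤ ‖T w‖ * ‖S d‖ :=
    calc ‖S d‖ * ‖S d‖ = ⟪d, (S ∘ₗ S) d⟫ := by
          rw [← real_inner_self_eq_norm_mul_norm, hS, LinearMap.comp_apply]
      _ ≤ ⟪w, d⟫ := h
      _ = ⟪T w, S d⟫ := by rw [← hS, ← LinearMap.comp_apply, hST, LinearMap.id_apply]
      _ ≤ ‖T w‖ * ‖S d‖ := real_inner_le_norm _ _
  obtain hd | hd := (norm_nonneg (S d)).eq_or_lt
  · exact hd ▸ norm_nonneg (T w)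
  · exact le_of_mul_le_mul_right hmul hd

theorem rsc_prox_contraction_general (hF : RestrictedStronglyMonotone P F) (hμ : 0 ≤ μ)
    (hz : IsResolvent μ F z) (hS : S.IsSymmetric) (hSS : S ∘ₗ S = LinearMap.id + μ • P)
    (hST : S ∘ₗ T = LinearMap.id) (x y : E) : ‖S (z x - z y)‖ ≤ ‖T (x - y)‖ :=
  norm_apply_le_norm_apply_of_inner_le hS hST (hSS ▸ hF.inner_resolvent_sub_le hμ hz x y)

end InnerProductSpace

open scoped ComplexOrder in
theorem isUnit_of_mul_self_eq_one_add_smul {ι 𝕜 : Type*} [Fintype ι] [DecidableEq ι] [RCLike 𝕜]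
    {M S : Matrix ι ι 𝕜} {μ : ℝ} (hM : M.PosSemidef) (hμ : 0 ≤ μ) (hSS : S * S = 1 + μ • M) :
    IsUnit S :=
  have hpos : (S * S).PosDef := hSS ▸ Matrix.PosDef.one.add_posSemidef (hM.smul hμ)
  isUnit_of_mul_isUnit_left hpos.isUnit

theorem rsc_prox_contraction
    {n : ℕ}
    (f : EuclideanSpace ℝ (Fin n) → ℝ)
    (fgrad : EuclideanSpace ℝ (Fin n) → EuclideanSpace ℝ (Fin n))
    (M : Matrix (Fin n) (Fin n) ℝ)
    (hM : M.PosSemidef)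
    -- f convex differentiable, M-restricted strongly convex
    (hconv : ConvexOn ℝ Set.univ f)
    (hgrad : ∀ x, HasGradientAt f (fgrad x) x)
    (hRSC : ∀ x y, ⟪x - y, Matrix.toEuclideanLin M (x - y)⟫ ≤ ⟪fgrad x - fgrad y, x - y⟫)
    -- the proximal operator with stepsize μ > 0
    (μ : ℝ) (hμ : 0 < μ)
    (z : EuclideanSpace ℝ (Fin n) → EuclideanSpace ℝ (Fin n))
    (hproxmin : ∀ x y, f (z x) + ‖z x - x‖ ^ 2 / (2 * μ) ≤ f y + ‖y - x‖ ^ 2 / (2 * μ))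
    (hproxopt : ∀ x, fgrad (z x) = μ⁻¹ • (x - z x))
    -- the positive semidefinite square root S = (I + μM)^{1/2}
    (S : Matrix (Fin n) (Fin n) ℝ)
    (hS : S.PosSemidef) (hSsq : S * S = 1 + μ • M) :
    ∀ x y, ‖Matrix.toEuclideanLin S (z x - z y)‖
      ≤ ‖Matrix.toEuclideanLin S⁻¹ (x - y)‖ := by
  have hSinv : S * S⁻¹ = 1 := S.mul_nonsing_inv <|
    S.isUnit_iff_isUnit_det.mp (isUnit_of_mul_self_eq_one_add_smul hM hμ.le hSsq)
  exact rsc_prox_contraction_general hRSC hμ.le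
    (isResolvent_of_eq_inv_smul_sub hμ.ne' hproxopt)
    (Matrix.isSymmetric_toEuclideanLin_iff.mpr hS.isHermitian)
    (by rw [← Matrix.toLpLin_mul_same, hSsq, map_add, map_smul, Matrix.toLpLin_one])
    (by rw [← Matrix.toLpLin_mul_same, hSinv, Matrix.toLpLin_one])
end
end
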